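/- Let u be a wellformed sublevel and v₁, …, vₙ wellformed sublevels (n ≥ 0). Then ⟦u⟧σ ≤ max(⟦v₁⟧σ, …, ⟦vₙ⟧σ) holds for every valuation σ (empty maximum being 0) if and only if there exists an index i with u ≤_T vᵢ. -/

import Mathlib

/-- The impredicative maximum on natural numbers. -/
def imaxN : ℕ → ℕ → ℕ
  | _, 0 => 0
  | i, (j+1) => max i (j+1)

/-- Sublevels A(E,x,S) and B(E,S). -/
inductive SubLvl where
  | A : Finset ℕ → ℕ → ℕ → SubLvl
  | B : Finset ℕ → ℕ → SubLvl
deriving DecidableEq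

/-- Value of a sublevel under a valuation. -/
def evalS (σ : ℕ → ℕ) : SubLvl → ℕ
  | .A E x S => if ∃ y ∈ E, σ y = 0 then 0 else σ x + S
  | .B E S => if ∃ y ∈ E, σ y = 0 then 0 else S

/-- Wellformed sublevels. -/
def Wf : SubLvl → Prop
  | .A E x _ => x ∈ E
  | .B _ S => 0 < S

/-- Semantic comparison of sublevels. -/
def leT (u v : SubLvl) : Prop := ∀ σ : ℕ → ℕ, evalS σ u ≤ evalS σ v

/-- Maximum of a list of naturals, 0 for the empty list. -/
def listMax (l : List ℕ) : ℕ := l.foldr max 0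

/-!
Test a wellformed `u` on a single valuation vanishing outside its guard `E`. There `u` is positive,
so some `v` is at least `u` at that valuation, and positivity of `v` forces the guard of `v` into
`E`. If `u = B(E,S)`, the valuation equal to `1` on `E` is the least one where `u` is positive, and
monotonicity carries the inequality to all others. If `u = A(E,x,S)`, take the value `1` on `E`
except at `x`, where it exceeds all constants of the `vᵢ` by `2`; this forces `v = A(F,x,T)` with
`S ≤ T`.
-/

theorem le_listMax_of_mem {m : ℕ} {l : List ℕ} (hm : m ∈ l) : m ≤ listMax l :=
  List.le_max_of_le hm le_rfl

theorem le_listMax_iff {n : ℕ} {l : List ℕ} (hn : 0 < n) : n ≤ listMax l ↔ ∃ m ∈ l, n ≤ m := by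
  induction l with
  | nil => simp [listMax, hn.ne']
  | cons a l ih => simpa [listMax] using or_congr_right ih

namespace SubLvl

/-- The set `E` of variables of `A(E,x,S)` or `B(E,S)` that must all be nonzero for the sublevel not
to be cut off to `0`. -/
def guard : SubLvl → Finset ℕ
  | A E _ _ => E
  | B E _ => E

/-- The summand `S` of `A(E,x,S)` or `B(E,S)`. -/
def const : SubLvl → ℕ
  | A _ _ S => S
  | B _ S => S

/-- The value `σ(x) + S` or `S` that a sublevel takes when it is not cut off by its guard. -/
def body (σ : ℕ → ℕ) : SubLvl → ℕ
  | A _ x S => σ x + S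
  | B _ S => S

variable {σ τ f : ℕ → ℕ} {u v : SubLvl} {E : Finset ℕ}

theorem evalS_eq_ite (σ : ℕ → ℕ) (u : SubLvl) :
    evalS σ u = if ∃ y ∈ u.guard, σ y = 0 then 0 else u.body σ := by
  cases u <;> rfl

theorem evalS_eq_body (hσ : ∀ y ∈ u.guard, σ y ≠ 0) : evalS σ u = u.body σ := by
  rw [evalS_eq_ite, if_neg (by simpa using hσ)]

theorem evalS_le_body (σ : ℕ → ℕ) (u : SubLvl) : evalS σ u ≤ u.body σ := by
  rw [evalS_eq_ite]
  split_ifs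
  exacts [Nat.zero_le _, le_rfl]

theorem ne_zero_of_evalS_pos (h : 0 < evalS σ u) : ∀ y ∈ u.guard, σ y ≠ 0 := by
  intro y hy hσy
  rw [evalS_eq_ite, if_pos ⟨y, hy, hσy⟩] at h
  exact h.false

theorem body_mono (v : SubLvl) (hστ : σ ≤ τ) : v.body σ ≤ v.body τ := by
  cases v with
  | A F y T => exact Nat.add_le_add_right (hστ y) T
  | B F T => exact le_rfl

theorem leT_of_guard_subset (hguard : v.guard ⊆ u.guard)
    (hbody : ∀ σ : ℕ → ℕ, (∀ y ∈ u.guard, σ y ≠ 0) → u.body σ ≤ v.body σ) : leT u v := by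
  intro σ
  rcases (evalS σ u).eq_zero_or_pos with hzero | hpos
  · exact hzero.trans_le (Nat.zero_le _)
  · have hσ := ne_zero_of_evalS_pos hpos
    rw [evalS_eq_body hσ, evalS_eq_body fun y hy => hσ y (hguard hy)]
    exact hbody σ hσ

theorem evalS_indicator_guard (hf : ∀ y ∈ u.guard, f y ≠ 0) :
    evalS (Set.indicator u.guard f) u = u.body (Set.indicator u.guard f) :=
  evalS_eq_body fun y hy => by simpa [hy] using hf y hy

theorem guard_subset_of_evalS_indicator_pos (h : 0 < evalS (Set.indicator E f) v) :
    v.guard ⊆ E :=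
  fun y hy => Set.mem_of_indicator_ne_zero (ne_zero_of_evalS_pos h y hy)

theorem leT_B_of_le_evalS_indicator_one {S : ℕ} (hS : 0 < S)
    (h : S ≤ evalS (Set.indicator E 1) v) : leT (B E S) v := by
  refine leT_of_guard_subset (guard_subset_of_evalS_indicator_pos (hS.trans_le h)) fun τ hτ => ?_
  have one_le : Set.indicator (E : Set ℕ) 1 ≤ τ :=
    Set.indicator_le' (fun y hy => Nat.one_le_iff_ne_zero.2 (hτ y hy)) fun _ _ => Nat.zero_le _
  calc S ≤ evalS (Set.indicator E 1) v := h
    _ ≤ v.body (Set.indicator E 1) := evalS_le_body _ v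
    _ ≤ v.body τ := v.body_mono one_le

theorem exists_eq_A_of_le_body_indicator_update {x S N : ℕ} (hN : v.const + 1 < N)
    (h : N + S ≤ v.body (Set.indicator E (Function.update 1 x N))) :
    ∃ F T, v = A F x T ∧ S ≤ T := by
  cases v with
  | B F T => simp only [body, const] at h hN; omega
  | A F y T =>
    simp only [body, const] at h hN
    have value_le : Set.indicator (E : Set ℕ) (Function.update 1 x N) y ≤
        Function.update (1 : ℕ → ℕ) x N y := Set.indicator_le_self _ _ y
    obtain rfl | hyx := eq_or_ne y x
    · rw [Function.update_self] at value_le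
      exact ⟨F, T, rfl, by omega⟩
    · rw [Function.update_of_ne hyx, Pi.one_apply] at value_le
      omega

theorem leT_A_of_le_evalS_indicator_update {x S N : ℕ} (hN : v.const + 1 < N)
    (h : N + S ≤ evalS (Set.indicator E (Function.update 1 x N)) v) : leT (A E x S) v := by
  have evalS_pos : 0 < evalS (Set.indicator E (Function.update 1 x N)) v := by omega
  obtain ⟨F, T, rfl, hST⟩ :=
    exists_eq_A_of_le_body_indicator_update hN (h.trans (evalS_le_body _ v))
  refine leT_of_guard_subset (guard_subset_of_evalS_indicator_pos evalS_pos) fun τ _ => ?_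
  exact Nat.add_le_add_left hST (τ x)

theorem exists_valuation_forall_leT (hu : Wf u) (K : ℕ) :
    ∃ σ : ℕ → ℕ, 0 < evalS σ u ∧
      ∀ v : SubLvl, v.const ≤ K → evalS σ u ≤ evalS σ v → leT u v := by
  cases u with
  | B E S =>
    have value : evalS (Set.indicator E 1) (B E S) = S :=
      evalS_indicator_guard (u := B E S) fun _ _ => one_ne_zero
    refine ⟨Set.indicator E 1, value.symm ▸ hu, fun v _ h => ?_⟩
    exact leT_B_of_le_evalS_indicator_one hu (value ▸ h)
  | A E x S =>
    have update_ne_zero (y : ℕ) : Function.update (1 : ℕ → ℕ) x (K + 2) y ≠ 0 := by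
      obtain rfl | hyx := eq_or_ne y x <;> simp [*]
    have value : evalS (Set.indicator E (Function.update 1 x (K + 2))) (A E x S) = K + 2 + S := by
      have hx : x ∈ E := hu
      simpa [body, guard, hx] using evalS_indicator_guard (u := A E x S) fun y _ => update_ne_zero y
    refine ⟨Set.indicator E (Function.update 1 x (K + 2)), by omega, fun v hv h => ?_⟩
    exact leT_A_of_le_evalS_indicator_update (by omega) (value ▸ h)

end SubLvl

theorem sublevel_le_max_iff_general (u : SubLvl) (hu : Wf u) (vs : List SubLvl) :
    (∀ σ : ℕ → ℕ, evalS σ u ≤ listMax (vs.map (evalS σ))) ↔ ∃ v ∈ vs, leT u v := by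
  constructor
  · intro h
    obtain ⟨σ, hpos, hleT⟩ := SubLvl.exists_valuation_forall_leT hu (listMax (vs.map SubLvl.const))
    obtain ⟨_, hmem, hle⟩ := (le_listMax_iff hpos).1 (h σ)
    obtain ⟨v, hv, rfl⟩ := List.mem_map.1 hmem
    exact ⟨v, hv, hleT v (le_listMax_of_mem (List.mem_map_of_mem hv)) hle⟩
  · rintro ⟨v, hv, huv⟩ σ
    exact (huv σ).trans (le_listMax_of_mem (List.mem_map_of_mem hv))

theorem sublevel_le_max_iff (u : SubLvl) (hu : Wf u)
    (vs : List SubLvl) (hvs : ∀ v ∈ vs, Wf v) :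
    (∀ σ : ℕ → ℕ, evalS σ u ≤ listMax (vs.map (evalS σ))) ↔
      ∃ v ∈ vs, leT u v :=
  sublevel_le_max_iff_general u hu vs
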